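/- arXiv:1307.6236 — 2 statements merged into one kernel-verified Lean document; each statement's English description precedes it below -/
import Mathlib

section
/- Let a, d, κ₀ > 0 and let u, ξ : [0, ∞) → ℝ be differentiable functions with u(0) > 0, ξ(0) > 0, u(t) ≥ 0, ξ(t) ≥ 0, satisfying the kinetic carcinogenesis system u'(t) = (a u(t)ξ(t)/(1 + u(t)ξ(t)) - d) u(t) and ξ'(t) = -ξ(t) - ξ(t) u(t)² + κ₀ for all t ≥ 0. Then u(t) + a ξ(t) ≤ max{u(0) + a ξ(0), a κ₀ / min{1, d}} for all t ≥ 0; in particular, the solution is uniformly bounded on [0, ∞). -/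
/-!
In the total `w = u + a ξ` the cubic terms cancel: `u' ≤ a ξ u² - d u`, while `a ξ'` contributes
`-a ξ u²`. What is left is linear damping with rate at least `m = min 1 d`, so
`w' ≤ -m w + a κ₀`. By Grönwall's inequality `w t` lies below
`e^{-mt} w 0 + (1 - e^{-mt}) a κ₀ / m`, a convex combination of the two terms of the maximum.
-/

open Set Real

section Relaxation

variable {m c : ℝ}

theorem gronwallBound_neg_le_max (hm : 0 < m) (δ : ℝ) {x : ℝ} (hx : 0 ≤ x) :
    gronwallBound δ (-m) c x ≤ max δ (c / m) := by
  have hexp : exp (-m * x) ≤ 1 :=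
    exp_le_one_iff.mpr (mul_nonpos_of_nonpos_of_nonneg (neg_nonpos.mpr hm.le) hx)
  calc
    gronwallBound δ (-m) c x = exp (-m * x) * δ + (1 - exp (-m * x)) * (c / m) := by
      rw [gronwallBound_of_K_ne_0 (neg_ne_zero.mpr hm.ne'), div_neg]
      ring
    _ ≤ max δ (c / m) :=
      Convex.combo_le_max δ (c / m) (exp_pos _).le (sub_nonneg.mpr hexp) (add_sub_cancel _ _)

theorem le_max_of_deriv_right_le_neg_mul_add {f f' : ℝ → ℝ} {a b : ℝ} (hm : 0 < m)
    (hf : ContinuousOn f (Icc a b)) (hf' : ∀ x ∈ Ico a b, HasDerivWithinAt f (f' x) (Ici x) x)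
    (bound : ∀ x ∈ Ico a b, f' x ≤ -m * f x + c) :
    ∀ x ∈ Icc a b, f x ≤ max (f a) (c / m) := fun x hx ↦
  (le_gronwallBound_of_liminf_deriv_right_le hf
    (fun y hy _ hr ↦ (hf' y hy).liminf_right_slope_le hr) le_rfl bound x hx).trans
    (gronwallBound_neg_le_max hm (f a) (sub_nonneg.mpr hx.1))

end Relaxation

theorem min_mul_add_le {R : Type*} [Semiring R] [LinearOrder R] [IsOrderedRing R] (c d : R)
    {x y : R} (hx : 0 ≤ x) (hy : 0 ≤ y) : min c d * (x + y) ≤ c * x + d * y := by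
  rw [mul_add]
  gcongr
  exacts [min_le_left c d, min_le_right c d]

section KineticRates

variable {K : Type*} [Field K] [LinearOrder K] [IsStrictOrderedRing K] {a x y : K}

theorem saturated_growth_le (d : K) (ha : 0 ≤ a) (hx : 0 ≤ x) (hy : 0 ≤ y) :
    (a * x * y / (1 + x * y) - d) * x ≤ a * y * x ^ 2 - d * x := by
  have hunsat : a * x * y / (1 + x * y) ≤ a * x * y :=
    div_le_self (by positivity) (le_add_of_nonneg_right (by positivity))
  calc
    (a * x * y / (1 + x * y) - d) * x ≤ (a * x * y - d) * x := by gcongr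
    _ = a * y * x ^ 2 - d * x := by ring

theorem kinetic_total_rate_le (d κ : K) (ha : 0 ≤ a) (hx : 0 ≤ x) (hy : 0 ≤ y) :
    (a * x * y / (1 + x * y) - d) * x + a * (-y - y * x ^ 2 + κ) ≤
      -(min 1 d) * (x + a * y) + a * κ := by
  have hdamp : min 1 d * (a * y + x) ≤ 1 * (a * y) + d * x :=
    min_mul_add_le 1 d (mul_nonneg ha hy) hx
  calc
    (a * x * y / (1 + x * y) - d) * x + a * (-y - y * x ^ 2 + κ)
      ≤ (a * y * x ^ 2 - d * x) + a * (-y - y * x ^ 2 + κ) := by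
        gcongr
        exact saturated_growth_le d ha hx hy
    _ = -(1 * (a * y) + d * x) + a * κ := by ring
    _ ≤ -(min 1 d * (a * y + x)) + a * κ := by gcongr
    _ = -(min 1 d) * (x + a * y) + a * κ := by ring

end KineticRates

/-- Space-homogeneous (kinetic) solutions of the carcinogenesis system are
uniformly bounded: `u(t) + aξ(t) ≤ max {u(0) + aξ(0), aκ₀/min{1,d}}`. -/
theorem stmt_13 (a d κ₀ : ℝ) (ha : 0 < a) (hd : 0 < d) (hκ₀ : 0 < κ₀)
    (u ξ : ℝ → ℝ) (hu0 : 0 < u 0) (hξ0 : 0 < ξ 0)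
    (hunn : ∀ t : ℝ, 0 ≤ t → 0 ≤ u t) (hξnn : ∀ t : ℝ, 0 ≤ t → 0 ≤ ξ t)
    (hu : ∀ t : ℝ, 0 ≤ t →
      HasDerivAt u ((a * u t * ξ t / (1 + u t * ξ t) - d) * u t) t)
    (hξ : ∀ t : ℝ, 0 ≤ t →
      HasDerivAt ξ (-ξ t - ξ t * (u t) ^ 2 + κ₀) t) :
    ∀ t : ℝ, 0 ≤ t →
      u t + a * ξ t ≤ max (u 0 + a * ξ 0) (a * κ₀ / min 1 d) := by
  intro t ht
  have hderiv (s : ℝ) (hs : 0 ≤ s) : HasDerivAt (fun r ↦ u r + a * ξ r)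
      ((a * u s * ξ s / (1 + u s * ξ s) - d) * u s + a * (-ξ s - ξ s * u s ^ 2 + κ₀)) s :=
    (hu s hs).fun_add ((hξ s hs).const_mul a)
  exact le_max_of_deriv_right_le_neg_mul_add (lt_min one_pos hd)
    (fun s hs ↦ (hderiv s hs.1).continuousAt.continuousWithinAt)
    (fun s hs ↦ (hderiv s hs.1).hasDerivWithinAt)
    (fun s hs ↦ kinetic_total_rate_le d κ₀ ha.le (hunn s hs.1) (hξnn s hs.1))
    t ⟨ht, le_rfl⟩
end

section
/- Let Ω ⊂ ℝⁿ be compact, equal to the closure of a nonempty open set, with Lebesgue measure |Ω| = 1. Let a, d, κ₀ > 0 satisfy 2(a - d) ≥ 1, a > d, and κ₀ ≥ 4a, and let λ satisfy 1/2 ≤ λ ≤ 1 - 2a/κ₀. Let u₀ ∈ C(Ω) be nonnegative and ξ₀ ∈ ℝ satisfy ξ₀ ∫_Ω u₀(x)² dx > λκ₀ and 0 < ξ₀ ≤ (1-λ)κ₀. Suppose the set Ω* := {x* ∈ Ω : u₀(x*) = max_{x ∈ Ω} u₀(x)} has measure zero and max_{x∈Ω} u₀(x) > 0. Let (u, ξ)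 be a nonnegative solution of the carcinogenesis shadow system on [0, ∞) with u(·,0) = u₀, ξ(0) = ξ₀, u(·,t) continuous on Ω for each t, ξ(t) > 0 for all t, such that t ↦ ∫_Ω u(x,t)² dx is differentiable with derivative ∫_Ω 2u u_t dx, and sup_{t>0} ∫_Ω u(x,t) dx < ∞. Then: sup_{t>0} u(x*, t) = +∞ for every x* ∈ Ω*; sup_{t>0} u(x, t) < +∞ for every x ∈ Ω \ Ω*; and inf_{t>0} ξ(t) = 0. -/
open MeasureTheory

/-- A nonnegative solution of the carcinogenesis shadow system
`u_t = (auξ/(1+uξ) - d)u`, `ξ' = -ξ - ξ∫_Ω u² dx + κ₀` on `[0, ∞)`. -/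
structure IsCarcSolution {n : ℕ} (a d κ₀ : ℝ) (Ω : Set (EuclideanSpace ℝ (Fin n)))
    (u : EuclideanSpace ℝ (Fin n) → ℝ → ℝ) (ξ : ℝ → ℝ) : Prop where
  nonneg_u : ∀ x ∈ Ω, ∀ t : ℝ, 0 ≤ t → 0 ≤ u x t
  nonneg_ξ : ∀ t : ℝ, 0 ≤ t → 0 ≤ ξ t
  deriv_u : ∀ x ∈ Ω, ∀ t : ℝ, 0 ≤ t →
    HasDerivAt (u x) ((a * u x t * ξ t / (1 + u x t * ξ t) - d) * u x t) t
  deriv_ξ : ∀ t : ℝ, 0 ≤ t →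
    HasDerivAt ξ (-ξ t - ξ t * (∫ x in Ω, (u x t) ^ 2) + κ₀) t
  int_sq : ∀ t : ℝ, 0 ≤ t → IntegrableOn (fun x => (u x t) ^ 2) Ω volume
  cont_ξ : ContinuousOn ξ (Set.Ici 0)

/-!
The region `ξ ∫ u² > λ κ₀`, `ξ ≤ (1 - λ) κ₀` is invariant: there `∫ u² ≥ 1`, and
`2 (a - d) ≥ 1` together with `2 a ≤ (1 - λ) κ₀` makes the derivative of `ξ ∫ u² - λ κ₀` at least
`-∫ u²` times that quantity.

At different points `u` solves the same scalar equation, so the order of the initial values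
persists. If `u` stayed bounded at a maximum point `y`, then `∫ u² ≤ u(y)²` would keep `ξ u(y)`
away from `0`; since the growth rate is strictly increasing in `u`, the quotient `u(x) / u(y)` would
decay exponentially whenever `u₀ x < u₀ y`. As the maximum points are null, `∫ u² → 0`, which
contradicts the invariance. At a point `x` that is not a maximum point, `u₀ > u₀ x` on an open set
of positive measure, where `u ≥ u(x)` from then on, so the bound on the mass bounds `u(x)`.

Finally, if `ξ ≥ ε`, a density above `2 a / ((a - d) ε)` grows exponentially. A spike exceeds this
threshold at some time, hence by continuity so do points near it that are not maximum points, and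
there `u` is bounded.
-/

open Set Filter Topology

section DifferentialInequality

theorem mul_exp_integral_le_of_mul_le_deriv {f f' h : ℝ → ℝ} {a b : ℝ} (hab : a ≤ b)
    (hf : ∀ t ∈ Icc a b, HasDerivWithinAt f (f' t) (Icc a b) t)
    (hh : ContinuousOn h (Icc a b)) (hle : ∀ t ∈ Ioo a b, h t * f t ≤ f' t) :
    f a * Real.exp (∫ s in a..b, h s) ≤ f b := by
  set H : ℝ → ℝ := fun t => ∫ s in a..t, h s with hH_def
  have hH_cont : ContinuousOn H (Icc a b) := by
    simpa only [uIcc_of_le hab] using intervalIntegral.continuousOn_primitive_interval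
      (hh.integrableOn_Icc.mono_set (uIcc_of_le hab).subset)
  have hH : ∀ t ∈ Ioo a b, HasDerivAt H (h t) t := fun t ht =>
    intervalIntegral.integral_hasDerivAt_right
      ((hh.mono (Icc_subset_Icc_right ht.2.le)).intervalIntegrable_of_Icc ht.1.le)
      ((hh.mono Ioo_subset_Icc_self).stronglyMeasurableAtFilter isOpen_Ioo t ht)
      (hh.continuousAt (Icc_mem_nhds ht.1 ht.2))
  have hmono : MonotoneOn (fun t => f t * Real.exp (-H t)) (Icc a b) := by
    refine monotoneOn_of_hasDerivWithinAt_nonneg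
      (f' := fun t => (f' t - h t * f t) * Real.exp (-H t)) (convex_Icc a b)
      (.mul (fun t ht => (hf t ht).continuousWithinAt) hH_cont.neg.rexp) ?_ ?_ <;>
      rw [interior_Icc] <;> intro t ht
    · refine (((hf t (Ioo_subset_Icc_self ht)).mono Ioo_subset_Icc_self).mul
        (hH t ht).neg.exp.hasDerivWithinAt).congr_deriv ?_
      simp only [Pi.neg_apply]
      ring
    · exact mul_nonneg (sub_nonneg.2 (hle t ht)) (Real.exp_pos _).le
  have hends := hmono (left_mem_Icc.2 hab) (right_mem_Icc.2 hab) hab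
  simp only [hH_def, intervalIntegral.integral_same, neg_zero, Real.exp_zero, mul_one,
    Real.exp_neg] at hends
  rwa [← div_eq_mul_inv, le_div_iff₀ (Real.exp_pos _)] at hends

theorem forall_lt_of_forall_Ico_lt {f : ℝ → ℝ} {a c : ℝ} (hf : ContinuousOn f (Ici a))
    (hstep : ∀ T, a ≤ T → (∀ s ∈ Ico a T, c < f s) → c < f T) {t : ℝ} (ht : a ≤ t) :
    c < f t := by
  by_contra! hbad
  have hcompact : IsCompact (Icc a t ∩ f ⁻¹' Iic c) :=
    isCompact_Icc.of_isClosed_subset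
      ((hf.mono Icc_subset_Ici_self).preimage_isClosed_of_isClosed isClosed_Icc isClosed_Iic)
      inter_subset_left
  obtain ⟨T, ⟨hT, hfT⟩, hleast⟩ := hcompact.exists_isLeast ⟨t, ⟨ht, le_rfl⟩, hbad⟩
  refine (hstep T hT.1 fun s hs => ?_).not_ge hfT
  by_contra! hfs
  exact hs.2.not_ge (hleast ⟨⟨hs.1, hs.2.le.trans hT.2⟩, hfs⟩)

end DifferentialInequality

/-- The per-capita growth rate `a v k / (1 + v k) - d` of cells of density `v` at growth-factor
concentration `k`. -/
noncomputable def growthRate (a d v k : ℝ) : ℝ := a * v * k / (1 + v * k) - d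

section GrowthRate

variable {a d v w k : ℝ}

theorem growthRate_sub_growthRate (hv : 0 ≤ v) (hw : 0 ≤ w) (hk : 0 ≤ k) :
    growthRate a d v k - growthRate a d w k =
      -(a * (k * (w - v)) / ((1 + v * k) * (1 + w * k))) := by
  have : 1 + v * k ≠ 0 := by positivity
  have : 1 + w * k ≠ 0 := by positivity
  unfold growthRate
  field_simp
  ring

theorem growthRate_mul_sub_growthRate_mul (hv : 0 ≤ v) (hw : 0 ≤ w) (hk : 0 ≤ k) :
    growthRate a d v k * v - growthRate a d w k * w =
      (a * k * (v + w + k * v * w) / ((1 + v * k) * (1 + w * k)) - d) * (v - w) := by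
  have : 1 + v * k ≠ 0 := by positivity
  have : 1 + w * k ≠ 0 := by positivity
  unfold growthRate
  field_simp
  ring

theorem growthRate_le_growthRate (ha : 0 ≤ a) (hv : 0 ≤ v) (hk : 0 ≤ k) (hvw : v ≤ w) :
    growthRate a d v k ≤ growthRate a d w k := by
  have hw := hv.trans hvw
  have := sub_nonneg.2 hvw
  rw [← sub_nonpos, growthRate_sub_growthRate hv hw hk, neg_nonpos]
  positivity

theorem growthRate_sub_growthRate_le {r m M : ℝ} (ha : 0 ≤ a) (hv : 0 ≤ v) (hw : 0 ≤ w)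
    (hk : 0 ≤ k) (hr : r ≤ 1) (hvw : v ≤ r * w) (hmw : m ≤ k * w) (hMw : k * w ≤ M) :
    growthRate a d v k - growthRate a d w k ≤ -(a * ((1 - r) * m) / (1 + M) ^ 2) := by
  have : 0 ≤ 1 - r := sub_nonneg.2 hr
  have hvw' : v ≤ w := hvw.trans (mul_le_of_le_one_left hw hr)
  have hnum : (1 - r) * m ≤ k * (w - v) := calc
    (1 - r) * m ≤ (1 - r) * (k * w) := by gcongr
    _ = k * (w - r * w) := by ring
    _ ≤ k * (w - v) := by gcongr
  have hden : (1 + v * k) * (1 + w * k) ≤ (1 + M) ^ 2 := calc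
    (1 + v * k) * (1 + w * k) ≤ (1 + w * k) * (1 + w * k) := by gcongr
    _ = (1 + k * w) ^ 2 := by ring
    _ ≤ (1 + M) ^ 2 := by gcongr
  rw [growthRate_sub_growthRate hv hw hk, neg_le_neg_iff]
  gcongr

theorem abs_growthRate_le (ha : 0 ≤ a) (hv : 0 ≤ v) (hk : 0 ≤ k) :
    |growthRate a d v k| ≤ a + |d| := by
  have hden : 0 < 1 + v * k := by positivity
  have hgain : |a * v * k / (1 + v * k)| ≤ a := by
    rw [abs_of_nonneg (by positivity), div_le_iff₀ hden]
    linarith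
  exact (abs_sub _ _).trans (by gcongr)

theorem le_mul_growthRate_mul (ha : 0 ≤ a) (hv : 0 ≤ v) (hk : 0 ≤ k) :
    2 * (a - d) * (k * v ^ 2) - a * (1 + v ^ 2) ≤ k * (2 * v * (growthRate a d v k * v)) := by
  have hden : 0 < 1 + v * k := by positivity
  have hsplit : k * (2 * v * (growthRate a d v k * v)) =
      2 * (a - d) * (k * v ^ 2) - a * (2 * (k * v ^ 2 / (1 + v * k))) := by
    unfold growthRate
    field_simp
    ring
  have hsat : k * v ^ 2 / (1 + v * k) ≤ v := by
    rw [div_le_iff₀ hden]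
    linarith
  have hloss : 2 * (k * v ^ 2 / (1 + v * k)) ≤ 1 + v ^ 2 := by linarith [sq_nonneg (v - 1)]
  rw [hsplit]
  gcongr

theorem half_sub_le_growthRate (hda : d < a) (hw : 2 * a / (a - d) ≤ v * k) (hvk : 0 ≤ v * k) :
    (a - d) / 2 ≤ growthRate a d v k := by
  rw [div_le_iff₀ (sub_pos.2 hda)] at hw
  have hgain : (a + d) / 2 ≤ a * v * k / (1 + v * k) := by
    rw [le_div_iff₀ (by linarith)]
    linarith
  unfold growthRate
  linarith

end GrowthRate

/-- A nonnegative solution on `[0, ∞)` of `v' = (a v ξ / (1 + v ξ) - d) v`, the equation satisfied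
by the cell density at one point of the domain for a prescribed growth-factor concentration `ξ`.
The derivative at `0` is one-sided. -/
structure IsTrajectory (a d : ℝ) (ξ v : ℝ → ℝ) : Prop where
  nonneg : ∀ t, 0 ≤ t → 0 ≤ v t
  hasDerivWithinAt : ∀ t, 0 ≤ t →
    HasDerivWithinAt v (growthRate a d (v t) (ξ t) * v t) (Ici 0) t

namespace IsTrajectory

variable {a d : ℝ} {ξ v w : ℝ → ℝ}

theorem continuousOn (hv : IsTrajectory a d ξ v) : ContinuousOn v (Ici 0) :=
  fun t ht => (hv.hasDerivWithinAt t ht).continuousWithinAt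

theorem ge_of_subsolution (hv : IsTrajectory a d ξ v) (hξ : ContinuousOn ξ (Ici 0))
    (hξ0 : ∀ t, 0 ≤ t → 0 ≤ ξ t) {w' : ℝ → ℝ} {t₀ t : ℝ} (ht₀ : 0 ≤ t₀) (ht : t₀ ≤ t)
    (hw0 : ∀ s ∈ Icc t₀ t, 0 ≤ w s)
    (hw : ∀ s ∈ Icc t₀ t, HasDerivWithinAt w (w' s) (Icc t₀ t) s)
    (hsub : ∀ s ∈ Ioo t₀ t, w' s ≤ growthRate a d (w s) (ξ s) * w s) (hinit : w t₀ ≤ v t₀) :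
    w t ≤ v t := by
  have hIcc : Icc t₀ t ⊆ Ici 0 := fun s hs => ht₀.trans hs.1
  have hv_cont := hv.continuousOn.mono hIcc
  have hw_cont : ContinuousOn w (Icc t₀ t) := fun s hs => (hw s hs).continuousWithinAt
  have hξ_cont := hξ.mono hIcc
  have hden : ∀ s ∈ Icc t₀ t, (1 + v s * ξ s) * (1 + w s * ξ s) ≠ 0 := fun s hs => by
    have := hv.nonneg s (hIcc hs)
    have := hw0 s hs
    have := hξ0 s (hIcc hs)
    positivity
  have hgap := mul_exp_integral_le_of_mul_le_deriv (f := fun s => v s - w s)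
    (h := fun s => a * ξ s * (v s + w s + ξ s * v s * w s) /
      ((1 + v s * ξ s) * (1 + w s * ξ s)) - d) ht
    (fun s hs => ((hv.hasDerivWithinAt s (hIcc hs)).mono hIcc).sub (hw s hs))
    (by fun_prop (disch := assumption))
    (fun s hs => by
      have hs' := Ioo_subset_Icc_self hs
      rw [← growthRate_mul_sub_growthRate_mul (hv.nonneg s (hIcc hs')) (hw0 s hs')
        (hξ0 s (hIcc hs'))]
      exact sub_le_sub_left (hsub s hs) _)
  exact sub_nonneg.1
    ((mul_nonneg (sub_nonneg.2 hinit) (Real.exp_pos _).le).trans hgap)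

theorem le_of_le_zero (hv : IsTrajectory a d ξ v) (hw : IsTrajectory a d ξ w)
    (hξ : ContinuousOn ξ (Ici 0)) (hξ0 : ∀ t, 0 ≤ t → 0 ≤ ξ t) (hinit : v 0 ≤ w 0) {t : ℝ}
    (ht : 0 ≤ t) : v t ≤ w t :=
  hw.ge_of_subsolution hξ hξ0 le_rfl ht (fun s hs => hv.nonneg s hs.1)
    (fun s hs => (hv.hasDerivWithinAt s hs.1).mono Icc_subset_Ici_self) (fun _ _ => le_rfl) hinit

theorem hasDerivWithinAt_div (hv : IsTrajectory a d ξ v) (hw : IsTrajectory a d ξ w) {t : ℝ}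
    (ht : 0 ≤ t) (hwt : w t ≠ 0) :
    HasDerivWithinAt (fun s => v s / w s)
      ((growthRate a d (v t) (ξ t) - growthRate a d (w t) (ξ t)) * (v t / w t)) (Ici 0) t := by
  refine ((hv.hasDerivWithinAt t ht).div (hw.hasDerivWithinAt t ht) hwt).congr_deriv ?_
  field_simp

theorem div_le_div_zero_mul_exp (hv : IsTrajectory a d ξ v) (hw : IsTrajectory a d ξ w) {c t : ℝ}
    (ht : 0 ≤ t) (hw_pos : ∀ s, 0 ≤ s → 0 < w s)
    (hgap : ∀ s ∈ Ioo 0 t, growthRate a d (v s) (ξ s) - growthRate a d (w s) (ξ s) ≤ -c) :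
    v t / w t ≤ v 0 / w 0 * Real.exp (-(c * t)) := by
  have hdecay := mul_exp_integral_le_of_mul_le_deriv (f := fun s => -(v s / w s))
    (h := fun _ => -c) ht
    (fun s hs => ((hv.hasDerivWithinAt_div hw hs.1 (hw_pos s hs.1).ne').mono
      Icc_subset_Ici_self).neg)
    continuousOn_const
    (fun s hs => by
      have hratio := div_nonneg (hv.nonneg s hs.1.le) (hw_pos s hs.1.le).le
      linarith [mul_le_mul_of_nonneg_right (hgap s hs) hratio])
  simpa only [intervalIntegral.integral_const, sub_zero, smul_eq_mul, mul_neg, neg_mul,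
    mul_comm t c, neg_le_neg_iff] using hdecay

theorem tendsto_zero_of_lt (ha : 0 < a) (hv : IsTrajectory a d ξ v) (hw : IsTrajectory a d ξ w)
    (hξ : ContinuousOn ξ (Ici 0)) (hξ0 : ∀ t, 0 ≤ t → 0 ≤ ξ t) {C m M : ℝ} (hm : 0 < m)
    (hwC : ∀ t, 0 ≤ t → w t ≤ C) (hmw : ∀ t, 0 ≤ t → m ≤ ξ t * w t)
    (hMw : ∀ t, 0 ≤ t → ξ t * w t ≤ M) (hinit : v 0 < w 0) : Tendsto v atTop (𝓝 0) := by
  have hw_pos : ∀ t, 0 ≤ t → 0 < w t := fun t ht =>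
    pos_of_mul_pos_right (hm.trans_le (hmw t ht)) (hξ0 t ht)
  have hvw : ∀ t, 0 ≤ t → v t ≤ w t := fun t ht => hv.le_of_le_zero hw hξ hξ0 hinit.le ht
  -- Ordering alone makes `v / w` nonincreasing, so `v ≤ r w`; this separates the two growth
  -- rates by a constant, which upgrades the decay of `v / w` to an exponential one.
  set r := v 0 / w 0
  have hr : r < 1 := (div_lt_one (hw_pos 0 le_rfl)).2 hinit
  have hratio : ∀ t, 0 ≤ t → v t ≤ r * w t := fun t ht => by
    have hdiv := hv.div_le_div_zero_mul_exp hw (c := 0) ht hw_pos fun s hs => by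
      simpa using growthRate_le_growthRate ha.le (hv.nonneg s hs.1.le) (hξ0 s hs.1.le)
        (hvw s hs.1.le)
    rwa [zero_mul, neg_zero, Real.exp_zero, mul_one, div_le_iff₀ (hw_pos t ht)] at hdiv
  set c := a * ((1 - r) * m) / (1 + M) ^ 2
  have hc : 0 < c := by
    have hM : 0 < M := hm.trans_le ((hmw 0 le_rfl).trans (hMw 0 le_rfl))
    have := sub_pos.2 hr
    positivity
  have hdecay : ∀ t, 0 ≤ t → v t ≤ r * Real.exp (-(c * t)) * C := fun t ht => by
    have hdiv := hv.div_le_div_zero_mul_exp hw ht hw_pos fun s hs =>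
      growthRate_sub_growthRate_le ha.le (hv.nonneg s hs.1.le) (hw.nonneg s hs.1.le)
        (hξ0 s hs.1.le) hr.le (hratio s hs.1.le) (hmw s hs.1.le) (hMw s hs.1.le)
    have hr0 : 0 ≤ r := div_nonneg (hv.nonneg 0 le_rfl) (hw.nonneg 0 le_rfl)
    rw [div_le_iff₀ (hw_pos t ht)] at hdiv
    exact hdiv.trans (mul_le_mul_of_nonneg_left (hwC t ht) (by positivity))
  have hlim : Tendsto (fun t => r * Real.exp (-(c * t)) * C) atTop (𝓝 0) := by
    have hexp := Real.tendsto_exp_neg_atTop_nhds_zero.comp (tendsto_id.const_mul_atTop hc)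
    simpa using (hexp.const_mul r).mul_const C
  exact squeeze_zero' ((eventually_ge_atTop 0).mono hv.nonneg)
    ((eventually_ge_atTop 0).mono hdecay) hlim

theorem tendsto_atTop_of_le (ha : 0 < a) (hda : d < a) (hv : IsTrajectory a d ξ v)
    (hξ : ContinuousOn ξ (Ici 0)) {ε t₀ : ℝ} (hε : 0 < ε) (hεξ : ∀ t, 0 ≤ t → ε ≤ ξ t)
    (ht₀ : 0 ≤ t₀) (hlarge : 2 * a / (a - d) / ε ≤ v t₀) : Tendsto v atTop atTop := by
  set K := 2 * a / (a - d) / ε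
  have hδ : 0 < a - d := sub_pos.2 hda
  have hK : 0 < K := by positivity
  have hrate : ∀ z t, K ≤ z → 0 ≤ t → (a - d) / 2 ≤ growthRate a d z (ξ t) := fun z t hz ht => by
    have hzξ : 2 * a / (a - d) ≤ z * ξ t := by
      rw [← div_mul_cancel₀ (2 * a / (a - d)) hε.ne']
      exact mul_le_mul hz (hεξ t ht) hε.le (hK.le.trans hz)
    exact half_sub_le_growthRate hda hzξ (le_trans (by positivity) hzξ)
  have hstay : ∀ t, t₀ ≤ t → K ≤ v t := fun t ht =>
    hv.ge_of_subsolution (w := fun _ => K) hξ (fun s hs => hε.le.trans (hεξ s hs)) ht₀ ht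
      (fun _ _ => hK.le) (fun s _ => hasDerivWithinAt_const s _ K)
      (fun s hs => mul_nonneg
        ((half_pos hδ).le.trans (hrate K s le_rfl (ht₀.trans hs.1.le))) hK.le) hlarge
  have hgrow : ∀ t, t₀ ≤ t → K * Real.exp ((t - t₀) * ((a - d) / 2)) ≤ v t := fun t ht => by
    have hIcc : Icc t₀ t ⊆ Ici 0 := fun s hs => ht₀.trans hs.1
    have hexp := mul_exp_integral_le_of_mul_le_deriv (h := fun _ => (a - d) / 2) ht
      (fun s hs => (hv.hasDerivWithinAt s (hIcc hs)).mono hIcc) continuousOn_const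
      (fun s hs => mul_le_mul_of_nonneg_right
        (hrate _ s (hstay s hs.1.le) (ht₀.trans hs.1.le)) (hv.nonneg s (ht₀.trans hs.1.le)))
    rw [intervalIntegral.integral_const, smul_eq_mul] at hexp
    exact (mul_le_mul_of_nonneg_right hlarge (Real.exp_pos _).le).trans hexp
  refine tendsto_atTop_mono' _ ((eventually_ge_atTop t₀).mono hgrow) ?_
  exact (Real.tendsto_exp_atTop.comp ((tendsto_atTop_add_const_right _ (-t₀)
    tendsto_id).atTop_mul_const (half_pos hδ))).const_mul_atTop hK

end IsTrajectory

/-- The squared `L²(μ)` norm `∫ u(x, t)² dμ(x)` of the density at time `t`. -/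
noncomputable def energy {X : Type*} [MeasurableSpace X] (μ : Measure X) (u : X → ℝ → ℝ)
    (t : ℝ) : ℝ := ∫ x, u x t ^ 2 ∂μ

/-- A nonnegative solution on `[0, ∞)` of the carcinogenesis shadow system over an arbitrary
measure space `(X, μ)` in place of `Ω` with Lebesgue measure. The densities `u(·, t)` lie in
`L²(μ)`, `ξ` is positive, and the energy may be differentiated under the integral sign. -/
structure IsShadowSolution {X : Type*} [MeasurableSpace X] (a d κ₀ : ℝ) (μ : Measure X)
    (u : X → ℝ → ℝ) (ξ : ℝ → ℝ) : Prop where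
  isTrajectory : ∀ x, IsTrajectory a d ξ (u x)
  pos_ξ : ∀ t, 0 ≤ t → 0 < ξ t
  memLp : ∀ t, 0 ≤ t → MemLp (fun x => u x t) 2 μ
  hasDerivWithinAt_ξ : ∀ t, 0 ≤ t →
    HasDerivWithinAt ξ (-ξ t - ξ t * energy μ u t + κ₀) (Ici 0) t
  hasDerivWithinAt_energy : ∀ t, 0 ≤ t → HasDerivWithinAt (energy μ u)
    (∫ x, 2 * u x t * (growthRate a d (u x t) (ξ t) * u x t) ∂μ) (Ici 0) t

namespace IsShadowSolution

variable {X : Type*} [MeasurableSpace X] {a d κ₀ lam : ℝ} {μ : Measure X} {u : X → ℝ → ℝ}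
  {ξ : ℝ → ℝ}

theorem continuousOn_ξ (hsol : IsShadowSolution a d κ₀ μ u ξ) : ContinuousOn ξ (Ici 0) :=
  fun t ht => (hsol.hasDerivWithinAt_ξ t ht).continuousWithinAt

theorem continuousOn_energy (hsol : IsShadowSolution a d κ₀ μ u ξ) :
    ContinuousOn (energy μ u) (Ici 0) :=
  fun t ht => (hsol.hasDerivWithinAt_energy t ht).continuousWithinAt

theorem le_of_le_zero (hsol : IsShadowSolution a d κ₀ μ u ξ) {x y : X} (hxy : u x 0 ≤ u y 0)
    {t : ℝ} (ht : 0 ≤ t) : u x t ≤ u y t :=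
  (hsol.isTrajectory x).le_of_le_zero (hsol.isTrajectory y) hsol.continuousOn_ξ
    (fun s hs => (hsol.pos_ξ s hs).le) hxy ht

theorem integrable_energy_deriv (ha : 0 ≤ a) (hsol : IsShadowSolution a d κ₀ μ u ξ) {t : ℝ}
    (ht : 0 ≤ t) :
    Integrable (fun x => 2 * u x t * (growthRate a d (u x t) (ξ t) * u x t)) μ := by
  have hmeas : AEMeasurable (fun x => growthRate a d (u x t) (ξ t)) μ := by
    have hu := (hsol.memLp t ht).aestronglyMeasurable.aemeasurable
    unfold growthRate
    fun_prop
  have hbound : ∀ x, ‖growthRate a d (u x t) (ξ t)‖ ≤ a + |d| := fun x =>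
    abs_growthRate_le ha ((hsol.isTrajectory x).nonneg t ht) (hsol.pos_ξ t ht).le
  convert ((hsol.memLp t ht).integrable_sq.bdd_mul hmeas.aestronglyMeasurable
    (.of_forall hbound)).const_mul 2 using 2
  ring

theorem le_mul_integral_energy_deriv [IsProbabilityMeasure μ] (ha : 0 ≤ a)
    (hsol : IsShadowSolution a d κ₀ μ u ξ) {t : ℝ} (ht : 0 ≤ t) :
    2 * (a - d) * (ξ t * energy μ u t) - a * (1 + energy μ u t) ≤
      ξ t * ∫ x, 2 * u x t * (growthRate a d (u x t) (ξ t) * u x t) ∂μ := by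
  have hsq := (hsol.memLp t ht).integrable_sq
  have hgain : Integrable (fun x => 2 * (a - d) * (ξ t * u x t ^ 2)) μ :=
    (hsq.const_mul _).const_mul _
  have hloss : Integrable (fun x => a * (1 + u x t ^ 2)) μ :=
    ((integrable_const 1).add hsq).const_mul a
  calc
    _ = ∫ x, 2 * (a - d) * (ξ t * u x t ^ 2) - a * (1 + u x t ^ 2) ∂μ := by
      rw [integral_sub hgain hloss, integral_const_mul, integral_const_mul, integral_const_mul,
        integral_add (integrable_const 1) hsq]
      simp [energy]
    _ ≤ ∫ x, ξ t * (2 * u x t * (growthRate a d (u x t) (ξ t) * u x t)) ∂μ :=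
      integral_mono (hgain.sub hloss) ((hsol.integrable_energy_deriv ha ht).const_mul _)
        fun x => le_mul_growthRate_mul ha ((hsol.isTrajectory x).nonneg t ht) (hsol.pos_ξ t ht).le
    _ = _ := integral_const_mul _ _

theorem le_of_lt_mul_energy (hsol : IsShadowSolution a d κ₀ μ u ξ)
    (hinit : ξ 0 ≤ (1 - lam) * κ₀) {t : ℝ} (ht : 0 ≤ t)
    (hlow : ∀ s ∈ Ioo 0 t, lam * κ₀ < ξ s * energy μ u s) : ξ t ≤ (1 - lam) * κ₀ := by
  have hgap := mul_exp_integral_le_of_mul_le_deriv (f := fun s => (1 - lam) * κ₀ - ξ s)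
    (h := fun _ => -1) ht
    (fun s hs => ((hsol.hasDerivWithinAt_ξ s hs.1).mono Icc_subset_Ici_self).const_sub _)
    continuousOn_const (fun s hs => by linarith [hlow s hs])
  exact sub_nonneg.1 ((mul_nonneg (sub_nonneg.2 hinit) (Real.exp_pos _).le).trans hgap)

theorem neg_energy_mul_le_deriv_mul_energy [IsProbabilityMeasure μ] (ha : 0 ≤ a) (hκ₀ : 0 ≤ κ₀)
    (had : 1 ≤ 2 * (a - d)) (hlam : 1 / 2 ≤ lam) (haκ : 2 * a ≤ (1 - lam) * κ₀)
    (hsol : IsShadowSolution a d κ₀ μ u ξ) {t : ℝ} (ht : 0 ≤ t)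
    (hlow : lam * κ₀ < ξ t * energy μ u t) (hup : ξ t ≤ (1 - lam) * κ₀) :
    -energy μ u t * (ξ t * energy μ u t - lam * κ₀) ≤
      (-ξ t - ξ t * energy μ u t + κ₀) * energy μ u t +
        ξ t * ∫ x, 2 * u x t * (growthRate a d (u x t) (ξ t) * u x t) ∂μ := by
  have hξ := hsol.pos_ξ t ht
  have hlam' : (1 - lam) * κ₀ ≤ lam * κ₀ := mul_le_mul_of_nonneg_right (by linarith) hκ₀
  have hone : 1 ≤ energy μ u t :=
    (lt_of_mul_lt_mul_left (a := ξ t) (by linarith) hξ.le).le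
  have hw : ξ t * energy μ u t ≤ 2 * (a - d) * (ξ t * energy μ u t) :=
    le_mul_of_one_le_left (by positivity) had
  have hloss : a * (1 + energy μ u t) ≤ 2 * a * energy μ u t := by
    linarith [mul_le_mul_of_nonneg_left hone ha]
  have hfeed : 2 * a * energy μ u t ≤ (1 - lam) * κ₀ * energy μ u t := by gcongr
  linarith [hsol.le_mul_integral_energy_deriv ha ht]

theorem lt_mul_energy [IsProbabilityMeasure μ] (ha : 0 ≤ a) (hκ₀ : 0 ≤ κ₀)
    (had : 1 ≤ 2 * (a - d)) (hlam : 1 / 2 ≤ lam) (haκ : 2 * a ≤ (1 - lam) * κ₀)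
    (hsol : IsShadowSolution a d κ₀ μ u ξ) (hlow : lam * κ₀ < ξ 0 * energy μ u 0)
    (hup : ξ 0 ≤ (1 - lam) * κ₀) {t : ℝ} (ht : 0 ≤ t) : lam * κ₀ < ξ t * energy μ u t := by
  refine forall_lt_of_forall_Ico_lt (hsol.continuousOn_ξ.mul hsol.continuousOn_energy)
    (fun T hT hbefore => ?_) ht
  have hgap := mul_exp_integral_le_of_mul_le_deriv
    (f := fun s => ξ s * energy μ u s - lam * κ₀) (h := fun s => -energy μ u s) hT
    (fun s hs => (((hsol.hasDerivWithinAt_ξ s hs.1).mul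
      (hsol.hasDerivWithinAt_energy s hs.1)).mono Icc_subset_Ici_self).sub_const _)
    (hsol.continuousOn_energy.mono Icc_subset_Ici_self).neg
    (fun s hs => hsol.neg_energy_mul_le_deriv_mul_energy ha hκ₀ had hlam haκ hs.1.le
      (hbefore s (Ioo_subset_Ico_self hs))
      (hsol.le_of_lt_mul_energy hup hs.1.le fun r hr => hbefore r ⟨hr.1.le, hr.2.trans hs.2⟩))
  exact sub_pos.1 ((mul_pos (sub_pos.2 hlow) (Real.exp_pos _)).trans_le hgap)

theorem energy_le_sq [IsProbabilityMeasure μ] (hsol : IsShadowSolution a d κ₀ μ u ξ) {t c : ℝ}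
    (ht : 0 ≤ t) (hc : ∀ x, u x t ≤ c) : energy μ u t ≤ c ^ 2 := by
  have hmono : energy μ u t ≤ ∫ _, c ^ 2 ∂μ :=
    integral_mono (hsol.memLp t ht).integrable_sq (integrable_const _)
      fun x => pow_le_pow_left₀ ((hsol.isTrajectory x).nonneg t ht) (hc x) 2
  simpa using hmono

theorem tendsto_energy_zero [IsFiniteMeasure μ] (hsol : IsShadowSolution a d κ₀ μ u ξ) {C : ℝ}
    (hbdd : ∀ x t, 0 ≤ t → u x t ≤ C)
    (hlim : ∀ᵐ x ∂μ, Tendsto (u x) atTop (𝓝 0)) : Tendsto (energy μ u) atTop (𝓝 0) := by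
  have hdom : Tendsto (energy μ u) atTop (𝓝 (∫ _, (0 : ℝ) ^ 2 ∂μ)) := by
    refine tendsto_integral_filter_of_dominated_convergence (fun _ => C ^ 2) ?_ ?_
      (integrable_const _) (hlim.mono fun x hx => hx.pow 2) <;>
      filter_upwards [eventually_ge_atTop 0] with t ht
    · exact (hsol.memLp t ht).aestronglyMeasurable.pow 2
    · refine .of_forall fun x => ?_
      rw [Real.norm_of_nonneg (sq_nonneg _)]
      exact pow_le_pow_left₀ ((hsol.isTrajectory x).nonneg t ht) (hbdd x t ht) 2
  simpa using hdom

theorem exists_lt_of_isMax [IsProbabilityMeasure μ] (ha : 0 < a)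
    (hsol : IsShadowSolution a d κ₀ μ u ξ) {m B : ℝ} (hm : 0 < m)
    (hlow : ∀ t, 0 ≤ t → m < ξ t * energy μ u t) (hup : ∀ t, 0 ≤ t → ξ t ≤ B)
    (hnull : μ {x | ∀ z, u z 0 ≤ u x 0} = 0) {y : X} (hy : ∀ x, u x 0 ≤ u y 0) (C : ℝ) :
    ∃ t, 0 ≤ t ∧ C < u y t := by
  by_contra! hC
  have hle : ∀ x t, 0 ≤ t → u x t ≤ u y t := fun x t ht => hsol.le_of_le_zero (hy x) ht
  have hB : 0 < B := (hsol.pos_ξ 0 le_rfl).trans_le (hup 0 le_rfl)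
  have hmC : ∀ t, 0 ≤ t → m < ξ t * u y t * C := fun t ht => calc
    m < ξ t * energy μ u t := hlow t ht
    _ ≤ ξ t * u y t ^ 2 :=
      mul_le_mul_of_nonneg_left (hsol.energy_le_sq ht fun x => hle x t ht) (hsol.pos_ξ t ht).le
    _ = ξ t * u y t * u y t := by ring
    _ ≤ ξ t * u y t * C := mul_le_mul_of_nonneg_left (hC t ht)
      (mul_nonneg (hsol.pos_ξ t ht).le ((hsol.isTrajectory y).nonneg t ht))
  have hCpos : 0 < C := pos_of_mul_pos_right (hm.trans (hmC 0 le_rfl))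
    (mul_nonneg (hsol.pos_ξ 0 le_rfl).le ((hsol.isTrajectory y).nonneg 0 le_rfl))
  have hdecay : ∀ x, u x 0 < u y 0 → Tendsto (u x) atTop (𝓝 0) := fun x hx =>
    (hsol.isTrajectory x).tendsto_zero_of_lt ha (hsol.isTrajectory y) hsol.continuousOn_ξ
      (fun t ht => (hsol.pos_ξ t ht).le) (div_pos hm hCpos) hC
      (fun t ht => (div_le_iff₀ hCpos).2 (hmC t ht).le)
      (fun t ht => mul_le_mul (hup t ht) (hC t ht) ((hsol.isTrajectory y).nonneg t ht) hB.le) hx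
  have henergy : Tendsto (energy μ u) atTop (𝓝 0) := by
    refine hsol.tendsto_energy_zero (fun x t ht => (hle x t ht).trans (hC t ht)) ?_
    filter_upwards [measure_eq_zero_iff_ae_notMem.1 hnull] with x hx
    exact hdecay x (not_le.1 fun hyx => hx fun z => (hy z).trans hyx)
  obtain ⟨t, hsmall, ht⟩ :=
    ((henergy.eventually (gt_mem_nhds (div_pos hm hB))).and (eventually_ge_atTop 0)).exists
  refine (hlow t ht).not_ge ?_
  calc
    ξ t * energy μ u t ≤ B * energy μ u t :=
      mul_le_mul_of_nonneg_right (hup t ht) (integral_nonneg fun _ => sq_nonneg _)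
    _ ≤ m := ((lt_div_iff₀' hB).1 hsmall).le

theorem exists_forall_le_of_measure_pos [IsFiniteMeasure μ]
    (hsol : IsShadowSolution a d κ₀ μ u ξ) {C : ℝ} (hmass : ∀ t, 0 ≤ t → ∫ x, u x t ∂μ ≤ C)
    {y : X} (hy : 0 < μ {x | u y 0 < u x 0}) : ∃ C, ∀ t, 0 ≤ t → u y t ≤ C := by
  have hA : 0 < μ.real {x | u y 0 < u x 0} := ENNReal.toReal_pos hy.ne' (measure_ne_top _ _)
  refine ⟨C / μ.real {x | u y 0 < u x 0}, fun t ht => (le_div_iff₀ hA).2 ?_⟩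
  calc
    u y t * μ.real {x | u y 0 < u x 0} ≤ u y t * μ.real {x | u y t ≤ u x t} := by
      refine mul_le_mul_of_nonneg_left (measureReal_mono fun x hx => ?_)
        ((hsol.isTrajectory y).nonneg t ht)
      exact hsol.le_of_le_zero (le_of_lt hx) ht
    _ ≤ ∫ x, u x t ∂μ := mul_meas_ge_le_integral_of_nonneg
      (.of_forall fun x => (hsol.isTrajectory x).nonneg t ht)
      ((hsol.memLp t ht).integrable one_le_two) _
    _ ≤ C := hmass t ht

theorem exists_lt_of_unbounded [TopologicalSpace X] [μ.IsOpenPosMeasure] (ha : 0 < a)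
    (hda : d < a) (hsol : IsShadowSolution a d κ₀ μ u ξ)
    (hcont : ∀ t, 0 ≤ t → Continuous fun x => u x t)
    (hbdd : ∀ᵐ x ∂μ, ∃ C, ∀ t, 0 ≤ t → u x t ≤ C) {y : X} (hy : ∀ C, ∃ t, 0 ≤ t ∧ C < u y t)
    {ε : ℝ} (hε : 0 < ε) : ∃ t, 0 ≤ t ∧ ξ t < ε := by
  by_contra! hεξ
  obtain ⟨t₀, ht₀, hyK⟩ := hy (2 * a / (a - d) / ε)
  have hopen : IsOpen {x | 2 * a / (a - d) / ε < u x t₀} :=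
    isOpen_lt continuous_const (hcont t₀ ht₀)
  obtain ⟨x, hxK, C, hC⟩ : ∃ x ∈ {x | 2 * a / (a - d) / ε < u x t₀},
      ∃ C, ∀ t, 0 ≤ t → u x t ≤ C :=
    (Measure.dense_of_ae hbdd).inter_open_nonempty _ hopen ⟨y, hyK⟩
  have hgrow := (hsol.isTrajectory x).tendsto_atTop_of_le ha hda hsol.continuousOn_ξ hε hεξ ht₀
    (le_of_lt hxK)
  obtain ⟨t, hlarge, ht⟩ :=
    ((hgrow.eventually_gt_atTop C).and (eventually_ge_atTop 0)).exists
  exact hlarge.not_ge (hC t ht)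

end IsShadowSolution

theorem stmt_18_general {X : Type*} [TopologicalSpace X] [MeasurableSpace X] {μ : Measure X}
    [IsProbabilityMeasure μ] [μ.IsOpenPosMeasure] {a d κ₀ lam : ℝ} (ha : 0 < a) (hκ₀ : 0 < κ₀)
    (had : 1 ≤ 2 * (a - d)) (hlam : 1 / 2 ≤ lam) (haκ : 2 * a ≤ (1 - lam) * κ₀)
    {u : X → ℝ → ℝ} {ξ : ℝ → ℝ} (hsol : IsShadowSolution a d κ₀ μ u ξ)
    (hcont : ∀ t, 0 ≤ t → Continuous fun x => u x t)
    (hlow : lam * κ₀ < ξ 0 * energy μ u 0) (hup : ξ 0 ≤ (1 - lam) * κ₀)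
    (hnull : μ {x | ∀ z, u z 0 ≤ u x 0} = 0) (hmax : ∃ y, ∀ x, u x 0 ≤ u y 0)
    (hmass : ∃ C, ∀ t, 0 ≤ t → ∫ x, u x t ∂μ ≤ C) :
    (∀ y, (∀ x, u x 0 ≤ u y 0) → ∀ C, ∃ t, 0 ≤ t ∧ C < u y t) ∧
    (∀ y, ¬(∀ x, u x 0 ≤ u y 0) → ∃ C, ∀ t, 0 ≤ t → u y t ≤ C) ∧
    (∀ ε, 0 < ε → ∃ t, 0 ≤ t ∧ ξ t < ε) := by
  have hlow_all : ∀ t, 0 ≤ t → lam * κ₀ < ξ t * energy μ u t := fun t ht =>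
    hsol.lt_mul_energy ha.le hκ₀.le had hlam haκ hlow hup ht
  have hup_all : ∀ t, 0 ≤ t → ξ t ≤ (1 - lam) * κ₀ := fun t ht =>
    hsol.le_of_lt_mul_energy hup ht fun s hs => hlow_all s hs.1.le
  have hspike : ∀ y, (∀ x, u x 0 ≤ u y 0) → ∀ C, ∃ t, 0 ≤ t ∧ C < u y t := fun y hy =>
    hsol.exists_lt_of_isMax ha (mul_pos (by linarith) hκ₀) hlow_all hup_all hnull hy
  have hbdd : ∀ y, ¬(∀ x, u x 0 ≤ u y 0) → ∃ C, ∀ t, 0 ≤ t → u y t ≤ C := fun y hy => by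
    obtain ⟨C, hC⟩ := hmass
    obtain ⟨x, hx⟩ := not_forall.1 hy
    exact hsol.exists_forall_le_of_measure_pos hC <|
      (isOpen_lt continuous_const (hcont 0 le_rfl)).measure_pos μ ⟨x, not_le.1 hx⟩
  obtain ⟨y, hy⟩ := hmax
  exact ⟨hspike, hbdd, fun ε hε => hsol.exists_lt_of_unbounded ha (by linarith) hcont
    ((measure_eq_zero_iff_ae_notMem.1 hnull).mono hbdd) (hspike y hy) hε⟩

section Subtype

variable {X : Type*} [MeasurableSpace X] {μ : Measure X} {s : Set X}

theorem isProbabilityMeasure_comap_subtype (hs : MeasurableSet s) (hμs : μ s = 1) :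
    IsProbabilityMeasure (μ.comap ((↑) : s → X)) :=
  ⟨by rw [comap_subtype_coe_apply hs, image_univ, Subtype.range_coe, hμs]⟩

theorem isOpenPosMeasure_comap_closure [TopologicalSpace X] [OpensMeasurableSpace X]
    [μ.IsOpenPosMeasure] (hs : IsOpen s) :
    (μ.comap ((↑) : closure s → X)).IsOpenPosMeasure := by
  refine ⟨fun U hU hne => ?_⟩
  obtain ⟨x, hx⟩ := hne
  obtain ⟨V, hV, rfl⟩ := isOpen_induced_iff.1 hU
  have hVs : 0 < μ (V ∩ s) := (hV.inter hs).measure_pos μ (mem_closure_iff.1 x.2 V hV hx)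
  rw [comap_subtype_coe_apply isClosed_closure.measurableSet, Subtype.image_preimage_coe]
  have hsub : V ∩ s ⊆ closure s ∩ V := fun z hz => ⟨subset_closure hz.2, hz.1⟩
  exact (hVs.trans_le (measure_mono hsub)).ne'

theorem comap_subtype_setOf (hs : MeasurableSet s) (p : X → Prop) :
    μ.comap ((↑) : s → X) {x | p x} = μ {x ∈ s | p x} := by
  rw [comap_subtype_coe_apply hs]
  exact congrArg μ (Subtype.image_preimage_coe s {x | p x})

theorem energy_comap_subtype (hs : MeasurableSet s) (u : X → ℝ → ℝ) :
    energy (μ.comap ((↑) : s → X)) (fun x : s => u x) = fun t => ∫ x in s, u x t ^ 2 ∂μ :=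
  funext fun t => integral_subtype_comap hs fun x => u x t ^ 2

theorem IsCarcSolution.isShadowSolution {n : ℕ} {a d κ₀ : ℝ} {Ω : Set (EuclideanSpace ℝ (Fin n))}
    {u : EuclideanSpace ℝ (Fin n) → ℝ → ℝ} {ξ : ℝ → ℝ} (hsol : IsCarcSolution a d κ₀ Ω u ξ)
    (hΩ : MeasurableSet Ω) (hcont : ∀ t, 0 ≤ t → ContinuousOn (fun x => u x t) Ω)
    (hξ : ∀ t, 0 ≤ t → 0 < ξ t)
    (henergy : ∀ t, 0 ≤ t → HasDerivAt (fun s => ∫ x in Ω, u x s ^ 2)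
      (∫ x in Ω, 2 * u x t * ((a * u x t * ξ t / (1 + u x t * ξ t) - d) * u x t)) t) :
    IsShadowSolution a d κ₀ (volume.comap ((↑) : Ω → EuclideanSpace ℝ (Fin n)))
      (fun x : Ω => u x) ξ where
  isTrajectory x := ⟨hsol.nonneg_u x x.2, fun t ht =>
    (hsol.deriv_u x x.2 t ht).hasDerivWithinAt⟩
  pos_ξ := hξ
  memLp t ht := (memLp_two_iff_integrable_sq
    (hcont t ht).domRestrict.aestronglyMeasurable).2
      ((integrableOn_iff_comap_subtypeVal hΩ).1 (hsol.int_sq t ht))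
  hasDerivWithinAt_ξ t ht := by
    rw [energy_comap_subtype hΩ u]
    exact (hsol.deriv_ξ t ht).hasDerivWithinAt
  hasDerivWithinAt_energy t ht := by
    have hgain := integral_subtype_comap (μ := volume) hΩ
      fun x => 2 * u x t * (growthRate a d (u x t) (ξ t) * u x t)
    rw [energy_comap_subtype hΩ u, hgain]
    exact (henergy t ht).hasDerivWithinAt

end Subtype

/-- Formation of unbounded spikes: the solution of the carcinogenesis shadow
system grows to `+∞` exactly at the maximum points of the initial datum, stays
bounded elsewhere, and `inf_{t>0} ξ(t) = 0`. -/
theorem stmt_18 {n : ℕ} (a d κ₀ lam : ℝ) (ha : 0 < a) (hd : 0 < d) (hκ₀ : 0 < κ₀)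
    (had : 1 ≤ 2 * (a - d)) (had' : d < a) (hκa : 4 * a ≤ κ₀)
    (hlam₁ : 1 / 2 ≤ lam) (hlam₂ : lam ≤ 1 - 2 * a / κ₀)
    (Ω Θ : Set (EuclideanSpace ℝ (Fin n)))
    (hΩcpt : IsCompact Ω) (hΘopen : IsOpen Θ) (hΘne : Θ.Nonempty)
    (hΩΘ : Ω = closure Θ) (hΩvol : volume Ω = 1)
    (u₀ : EuclideanSpace ℝ (Fin n) → ℝ)
    (hu₀cont : ContinuousOn u₀ Ω) (hu₀nn : ∀ x ∈ Ω, 0 ≤ u₀ x)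
    (ξ₀ : ℝ)
    (hini₁ : lam * κ₀ < ξ₀ * ∫ x in Ω, (u₀ x) ^ 2)
    (hini₂ : 0 < ξ₀ ∧ ξ₀ ≤ (1 - lam) * κ₀)
    (hstar_null : volume {y ∈ Ω | ∀ x ∈ Ω, u₀ x ≤ u₀ y} = 0)
    (hmaxpos : ∃ y ∈ Ω, (∀ x ∈ Ω, u₀ x ≤ u₀ y) ∧ 0 < u₀ y)
    (u : EuclideanSpace ℝ (Fin n) → ℝ → ℝ) (ξ : ℝ → ℝ)
    (hsol : IsCarcSolution a d κ₀ Ω u ξ)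
    (hu0 : ∀ x ∈ Ω, u x 0 = u₀ x) (hξ0 : ξ 0 = ξ₀)
    (hucont : ∀ t : ℝ, 0 ≤ t → ContinuousOn (fun x => u x t) Ω)
    (hξpos : ∀ t : ℝ, 0 ≤ t → 0 < ξ t)
    (hint_u : ∀ t : ℝ, 0 ≤ t → IntegrableOn (fun x => u x t) Ω volume)
    (hL2deriv : ∀ t : ℝ, 0 ≤ t →
      HasDerivAt (fun s => ∫ x in Ω, (u x s) ^ 2)
        (∫ x in Ω, 2 * u x t * ((a * u x t * ξ t / (1 + u x t * ξ t) - d) * u x t)) t)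
    (hmass : ∃ C : ℝ, ∀ t : ℝ, 0 ≤ t → (∫ x in Ω, u x t) ≤ C) :
    (∀ y ∈ Ω, (∀ x ∈ Ω, u₀ x ≤ u₀ y) → ∀ C : ℝ, ∃ t : ℝ, 0 ≤ t ∧ C < u y t) ∧
    (∀ y ∈ Ω, ¬(∀ x ∈ Ω, u₀ x ≤ u₀ y) → ∃ C : ℝ, ∀ t : ℝ, 0 ≤ t → u y t ≤ C) ∧
    (∀ ε : ℝ, 0 < ε → ∃ t : ℝ, 0 ≤ t ∧ ξ t < ε) := by
  obtain ⟨y, hy, hymax, -⟩ := hmaxpos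
  subst hΩΘ hξ0
  have hΩ : MeasurableSet (closure Θ) := isClosed_closure.measurableSet
  have := isProbabilityMeasure_comap_subtype hΩ hΩvol
  have := isOpenPosMeasure_comap_closure (μ := volume) hΘopen
  have hu0' : ∀ x : closure Θ, u x 0 = u₀ x := fun x => hu0 x x.2
  have henergy : energy (volume.comap Subtype.val) (fun x : closure Θ => u x) 0 =
      ∫ x in closure Θ, u₀ x ^ 2 := by
    simp only [energy, hu0', integral_subtype_comap hΩ fun x => u₀ x ^ 2]
  have hnull : volume.comap Subtype.val {x : closure Θ | ∀ z : closure Θ, u z 0 ≤ u x 0} = 0 := by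
    simpa only [hu0', Subtype.forall, comap_subtype_setOf hΩ fun y => ∀ x ∈ closure Θ, u₀ x ≤ u₀ y]
      using hstar_null
  have hconcl := stmt_18_general ha hκ₀ had hlam₁
    (by rwa [le_sub_comm, div_le_iff₀ hκ₀] at hlam₂)
    (hsol.isShadowSolution hΩ hucont hξpos hL2deriv) (fun t ht => (hucont t ht).domRestrict)
    (henergy ▸ hini₁) hini₂.2 hnull
    ⟨⟨y, hy⟩, fun x => (hu0' x).trans_le ((hymax x x.2).trans_eq (hu0 y hy).symm)⟩
    (hmass.imp fun C hC t ht => (integral_subtype_comap hΩ fun x => u x t).trans_le (hC t ht))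
  simpa only [hu0', Subtype.forall] using hconcl
end
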